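/- In the setting of the 1-SAM gradient flow for the diagonal linear network (ℓ_i(w) = (1/4)(⟨β(w), x_i⟩ − y_i)², flow w′(t) = −(1/n)∑_i ∇ℓ_i(w(t) + ρ∇ℓ_i(w(t))), w(0) = (α, α), r_i(t) = ⟨β(w(t)), x_i⟩ − y_i, r_{sam,i}(t) = ⟨β(w(t) + ρ∇ℓ_i(w(t))), x_i⟩ − y_i), assume additionally that there exist R, B ≥ 0 and β* ∈ ℝ^d with Xβ* = y such that ‖x_i‖₂ ≤ R for all i and ‖β(w(t))‖₂ ≤ B for all t ≥ 0, and that 0 ≤ ρ ≤ 1/(4R²√(B(B + ‖β*‖₂))). Then for every i and t ≥ 0 one has r_{sam,i}(t)·r_i(t) ≥ 0; consequently, whenever the integrals ∫₀^∞ r_{sam,i}(s) r_i(s) ds converge, the effective initialization α′ defined componentwise by (α′_j)² = α_j²·exp(−(2ρ/n)·∑_{i=1}^n x_{ij}²·∫₀^∞ r_{sam,i}(s) r_i(s) ds) satisfies α′_j ≤ α_j for every j ∈ {1,…,d}. -/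

import Mathlib

open scoped RealInnerProductSpace

noncomputable section

/-- Linear predictor of a diagonal linear network: `β(w)ⱼ = (w₊)ⱼ² − (w₋)ⱼ²`, where the
parameter vector `v ∈ ℝ^{2d}` is indexed by `Fin d ⊕ Fin d` (`inl` = `w₊`, `inr` = `w₋`). -/
def betaOf {d : ℕ} (v : EuclideanSpace ℝ (Fin d ⊕ Fin d)) (j : Fin d) : ℝ :=
  v (Sum.inl j) ^ 2 - v (Sum.inr j) ^ 2

/-- Residual of the predictor at the `i`-th data point: `⟨β(v), xᵢ⟩ − yᵢ`. -/
def resid {d n : ℕ} (X : Matrix (Fin n) (Fin d) ℝ) (y : Fin n → ℝ)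
    (v : EuclideanSpace ℝ (Fin d ⊕ Fin d)) (i : Fin n) : ℝ :=
  ∑ j, X i j * betaOf v j - y i

/-- The per-example squared loss `ℓᵢ(w) = (1/4)(⟨β(w), xᵢ⟩ − yᵢ)²`. -/
def exLoss {d n : ℕ} (X : Matrix (Fin n) (Fin d) ℝ) (y : Fin n → ℝ) (i : Fin n)
    (v : EuclideanSpace ℝ (Fin d ⊕ Fin d)) : ℝ :=
  (1 / 4 : ℝ) * resid X y v i ^ 2

/-- The 1-SAM ascent point for example `i`: `w(t) + ρ∇ℓᵢ(w(t))`. -/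
def oneSamAscent {d n : ℕ} (X : Matrix (Fin n) (Fin d) ℝ) (y : Fin n → ℝ) (ρ : ℝ)
    (w : ℝ → EuclideanSpace ℝ (Fin d ⊕ Fin d)) (i : Fin n) (t : ℝ) :
    EuclideanSpace ℝ (Fin d ⊕ Fin d) :=
  w t + ρ • gradient (exLoss X y i) (w t)

end

theorem exLoss_grad_aux {d n : ℕ} (X : Matrix (Fin n) (Fin d) ℝ) (y : Fin n → ℝ) (i : Fin n)
    (v : EuclideanSpace ℝ (Fin d ⊕ Fin d)) :
    gradient (exLoss X y i) v = WithLp.toLp 2 (Sum.elim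
      (fun j => resid X y v i * X i j * v (Sum.inl j))
      (fun j => -(resid X y v i * X i j * v (Sum.inr j)))) := by
  apply HasGradientAt.gradient
  rw [hasGradientAt_iff_hasFDerivAt]
  have hc : ∀ k : Fin d ⊕ Fin d, HasFDerivAt (fun u : EuclideanSpace ℝ (Fin d ⊕ Fin d) => u k)
      (EuclideanSpace.proj k : EuclideanSpace ℝ (Fin d ⊕ Fin d) →L[ℝ] ℝ) v :=
    fun k => (EuclideanSpace.proj k : EuclideanSpace ℝ (Fin d ⊕ Fin d) →L[ℝ] ℝ).hasFDerivAt
  have hb := fun j : Fin d =>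
    ((((hc (Sum.inl j)).pow 2).sub ((hc (Sum.inr j)).pow 2)).const_mul (X i j))
  have hr := (HasFDerivAt.fun_sum (u := Finset.univ) (fun j _ => hb j)).sub_const (y i)
  have hl := (hr.pow 2).const_mul (1 / 4 : ℝ)
  refine HasFDerivAt.congr_fderiv (f := exLoss X y i) hl ?_
  ext u
  simp [PiLp.inner_apply, resid, betaOf, Finset.mul_sum]
  rw [← sub_eq_add_neg, ← Finset.sum_sub_distrib]
  refine Finset.sum_congr rfl fun j _ => ?_
  ring

theorem resid_ascent_aux {d n : ℕ} (X : Matrix (Fin n) (Fin d) ℝ) (y : Fin n → ℝ) (ρ : ℝ)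
    (w : ℝ → EuclideanSpace ℝ (Fin d ⊕ Fin d)) (i : Fin n) (t : ℝ) :
    resid X y (oneSamAscent X y ρ w i t) i = resid X y (w t) i *
      (1 + ρ ^ 2 * (resid X y (w t) i * ∑ j, X i j ^ 2 * (X i j * betaOf (w t) j)) +
        2 * ρ * ∑ j, X i j ^ 2 * (w t (Sum.inl j) ^ 2 + w t (Sum.inr j) ^ 2)) := by
  have key : ∀ r : ℝ, ∑ j, X i j * ((w t (Sum.inl j) + ρ * (r * X i j * w t (Sum.inl j))) ^ 2 -
      (w t (Sum.inr j) + ρ * (-(r * X i j * w t (Sum.inr j)))) ^ 2) =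
      ∑ j, X i j * betaOf (w t) j +
      r * (ρ ^ 2 * (r * ∑ j, X i j ^ 2 * (X i j * betaOf (w t) j)) +
        2 * ρ * ∑ j, X i j ^ 2 * (w t (Sum.inl j) ^ 2 + w t (Sum.inr j) ^ 2)) := by
    intro r
    simp only [Finset.mul_sum, ← Finset.sum_add_distrib]
    refine Finset.sum_congr rfl fun j _ => ?_
    simp only [betaOf]; ring
  have h := key (resid X y (w t) i)
  have h2 : resid X y (oneSamAscent X y ρ w i t) i =
    ∑ j, X i j * ((w t (Sum.inl j) + ρ * (resid X y (w t) i * X i j * w t (Sum.inl j))) ^ 2 -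
      (w t (Sum.inr j) + ρ * (-(resid X y (w t) i * X i j * w t (Sum.inr j)))) ^ 2) - y i := by
    rw [oneSamAscent, exLoss_grad_aux]
    conv_lhs => rw [resid]
    simp [betaOf]
  rw [h2, h]
  have h3 : resid X y (w t) i = ∑ j, X i j * betaOf (w t) j - y i := rfl
  linear_combination (-1 : ℝ) * h3

theorem abs_sum_aux {d : ℕ} (a b : Fin d → ℝ) :
    ∑ j, |a j * b j| ≤ √(∑ j, a j ^ 2) * √(∑ j, b j ^ 2) := by
  have := Real.sum_mul_le_sqrt_mul_sqrt Finset.univ (fun j => |a j|) (fun j => |b j|)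
  simpa [abs_mul] using this

theorem factor_aux {d : ℕ} (x b s : Fin d → ℝ) (R B ρ : ℝ) (hR : 0 ≤ R) (hB : 0 ≤ B) (hρ : 0 ≤ ρ)
    (hx : √(∑ j, x j ^ 2) ≤ R) (hb : √(∑ j, b j ^ 2) ≤ B)
    (hρb : ρ ≤ 1 / (4 * R ^ 2 * √(B * (B + √(∑ j, s j ^ 2))))) :
    -1 ≤ ρ ^ 2 * ((∑ j, x j * b j - ∑ j, x j * s j) * ∑ j, x j ^ 2 * (x j * b j)) := by
  set S := √(∑ j, s j ^ 2) with hS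
  have hS0 : 0 ≤ S := Real.sqrt_nonneg _
  have h1 : ∑ j, |x j * b j| ≤ R * B :=
    (abs_sum_aux x b).trans (mul_le_mul hx hb (Real.sqrt_nonneg _) hR)
  have h2 : ∑ j, |x j * s j| ≤ R * S :=
    (abs_sum_aux x s).trans (mul_le_mul_of_nonneg_right hx hS0)
  have hr : |∑ j, x j * b j - ∑ j, x j * s j| ≤ R * (B + S) := by
    have a1 := Finset.abs_sum_le_sum_abs (fun j => x j * b j) Finset.univ
    have a2 := Finset.abs_sum_le_sum_abs (fun j => x j * s j) Finset.univ
    have a3 := abs_sub (∑ j, x j * b j) (∑ j, x j * s j)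
    linarith
  have hxj : ∀ j, x j ^ 2 ≤ R ^ 2 := fun j =>
    (Finset.single_le_sum (f := fun j => x j ^ 2) (fun j _ => sq_nonneg _)
      (Finset.mem_univ j)).trans ((Real.sqrt_le_left hR).1 hx)
  have h3 : |∑ j, x j ^ 2 * (x j * b j)| ≤ R ^ 2 * (R * B) := by
    calc _ ≤ ∑ j, |x j ^ 2 * (x j * b j)| := Finset.abs_sum_le_sum_abs _ _
      _ ≤ ∑ j, R ^ 2 * |x j * b j| := Finset.sum_le_sum fun j _ => by
          rw [abs_mul, abs_of_nonneg (sq_nonneg (x j))]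
          exact mul_le_mul_of_nonneg_right (hxj j) (abs_nonneg _)
      _ ≤ _ := by
          rw [← Finset.mul_sum]; exact mul_le_mul_of_nonneg_left h1 (sq_nonneg _)
  have hq : ρ * (4 * R ^ 2 * √(B * (B + S))) ≤ 1 := by
    have hD : 0 ≤ 4 * R ^ 2 * √(B * (B + S)) := by positivity
    rcases hD.eq_or_lt with h | h
    · rw [← h]; simp
    · exact (le_div_iff₀ h).1 hρb
  have hq2 : ρ ^ 2 * (16 * R ^ 4 * (B * (B + S))) ≤ 1 := by
    have h := pow_le_one₀ (n := 2) (by positivity) hq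
    rw [mul_pow, mul_pow, Real.sq_sqrt (by positivity)] at h
    nlinarith
  have h4 := mul_le_mul hr h3 (abs_nonneg _) (by positivity)
  rw [← abs_mul] at h4
  have h5 := mul_le_mul_of_nonneg_left ((neg_le_abs _).trans h4) (sq_nonneg ρ)
  have h6 : 0 ≤ ρ ^ 2 * (R ^ 4 * (B * (B + S))) := by positivity
  nlinarith

/-- For the 1-SAM gradient flow on a diagonal linear network, if
`‖xᵢ‖₂ ≤ R` for all `i`, `‖β(w(t))‖₂ ≤ B` for all `t ≥ 0`, there is an interpolator `β*`
(`Xβ* = y`), and `0 ≤ ρ ≤ 1/(4R²√(B(B + ‖β*‖₂)))`, then `r_{sam,i}(t)·rᵢ(t) ≥ 0` for all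
`i` and `t ≥ 0`; consequently, whenever the integrals `∫₀^∞ r_{sam,i}(s) rᵢ(s) ds` converge,
the effective initialization `α′` with
`(α′ⱼ)² = αⱼ²·exp(−(2ρ/n)·∑ᵢ xᵢⱼ²·∫₀^∞ r_{sam,i}(s) rᵢ(s) ds)` satisfies `α′ⱼ ≤ αⱼ`
for every `j`. -/
theorem onesam_effective_alpha_decreases {d n : ℕ}
    (X : Matrix (Fin n) (Fin d) ℝ) (y : Fin n → ℝ)
    (ρ : ℝ) (hρ : 0 ≤ ρ) (α : Fin d → ℝ) (hα : ∀ j, 0 < α j)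
    (w : ℝ → EuclideanSpace ℝ (Fin d ⊕ Fin d))
    (hflow : ∀ t ∈ Set.Ici (0 : ℝ), HasDerivWithinAt w
      (-((n : ℝ)⁻¹ • ∑ i, gradient (exLoss X y i) (oneSamAscent X y ρ w i t)))
      (Set.Ici 0) t)
    (hinit : ∀ j, w 0 (Sum.inl j) = α j ∧ w 0 (Sum.inr j) = α j)
    (R B : ℝ) (hR : 0 ≤ R) (hB : 0 ≤ B)
    (βstar : Fin d → ℝ) (hβstar : ∀ i, ∑ j, X i j * βstar j = y i)
    (hxR : ∀ i, Real.sqrt (∑ j, X i j ^ 2) ≤ R)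
    (hβB : ∀ t ∈ Set.Ici (0 : ℝ), Real.sqrt (∑ j, betaOf (w t) j ^ 2) ≤ B)
    (hρbound : ρ ≤ 1 / (4 * R ^ 2 *
      Real.sqrt (B * (B + Real.sqrt (∑ j, βstar j ^ 2))))) :
    (∀ i, ∀ t ∈ Set.Ici (0 : ℝ), 0 ≤ resid X y (oneSamAscent X y ρ w i t) i * resid X y (w t) i) ∧
    ((∀ i : Fin n, MeasureTheory.IntegrableOn
        (fun s => resid X y (oneSamAscent X y ρ w i s) i * resid X y (w s) i) (Set.Ioi 0)) →
      ∀ α' : Fin d → ℝ, (∀ j, 0 < α' j) →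
        (∀ j, α' j ^ 2 = α j ^ 2 * Real.exp (-(2 * ρ / n) *
          ∑ i, X i j ^ 2 *
            ∫ s in Set.Ioi (0 : ℝ),
              resid X y (oneSamAscent X y ρ w i s) i * resid X y (w s) i)) →
        ∀ j, α' j ≤ α j) := by
  have main : ∀ i, ∀ t ∈ Set.Ici (0 : ℝ),
      0 ≤ resid X y (oneSamAscent X y ρ w i t) i * resid X y (w t) i := by
    intro i t ht
    have h := factor_aux (X i) (betaOf (w t)) βstar R B ρ hR hB hρ (hxR i) (hβB t ht) hρbound
    rw [hβstar i] at h
    change -1 ≤ ρ ^ 2 * (resid X y (w t) i * _) at h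
    rw [resid_ascent_aux]
    have h2 : 0 ≤ 2 * ρ * ∑ j, X i j ^ 2 * (w t (Sum.inl j) ^ 2 + w t (Sum.inr j) ^ 2) :=
      mul_nonneg (by positivity) (Finset.sum_nonneg fun j _ => by positivity)
    rw [mul_right_comm]
    exact mul_nonneg (mul_self_nonneg _) (by linarith)
  refine ⟨main, fun _ α' hα' h j => ?_⟩
  refine (sq_le_sq₀ (hα' j).le (hα j).le).1 ?_
  rw [h j]
  refine mul_le_of_le_one_right (sq_nonneg _) (Real.exp_le_one_iff.2 ?_)
  rw [neg_mul]
  refine neg_nonpos.2 (mul_nonneg (by positivity) (Finset.sum_nonneg fun i _ =>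
    mul_nonneg (sq_nonneg _) (MeasureTheory.setIntegral_nonneg measurableSet_Ioi
      fun s hs => main i s (Set.Ioi_subset_Ici_self hs))))
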